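/- arXiv:1611.06560 — 3 statements merged into one kernel-verified Lean document; each statement's English description precedes it below -/
import Mathlib

section
/- Let T be an invertible bounded linear operator on a complex Banach space X such that the spectrum of T is contained in the closed unit disk and ‖R(t,T)‖ ≤ C/|t−1| for every t ∈ ℂ with |t| > 1, where R(t,T) = (t·I − T)⁻¹ (i.e., T is a Ritt operator). Then: (i) for every t ≠ 0 such that 1/t lies in the resolvent set of T, the point t lies in the resolvent set of T⁻¹ and R(t,T⁻¹) = (−1/t)·T·R(1/t,T); (ii) every t ∈ (0,1] lies in the resolvent set of T⁻¹ + I and ‖R(t, T⁻¹ + I)‖ ≤ C‖T‖/t; in other words, T⁻¹ + I belongs to V_{(0,1]}(X) with constant C‖T‖. -/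
open Set

/-!
For `t ∈ (0, 1)` the resolvent `R(t, T⁻¹ + 1) = R(t - 1, T⁻¹)` is `(1 - t)⁻¹ T R(z, T)` with
`z = (t - 1)⁻¹ < -1`, and the Ritt bound at `z` gives `‖R(t, T⁻¹ + 1)‖ ≤ C‖T‖ / (2 - t)`. At
`t = 1` this resolvent is `-T`, and `‖T‖ ≤ C‖T‖` because `z R(z, T) T` tends to `T` as `z → -∞`.
-/

open Bornology Filter Topology

section CommSemiring

variable {R A : Type*} [CommSemiring R] [Ring A] [Algebra R A]

theorem resolvent_units_inv {u : Aˣ} {r : Rˣ} (h : (↑r⁻¹ : R) ∈ resolventSet R (u : A)) :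
    resolvent (↑u⁻¹ : A) (r : R) = -((↑r⁻¹ : R) • ((u : A) * resolvent (u : A) (↑r⁻¹ : R))) := by
  have hr : (r : R) ∈ resolventSet R (↑u⁻¹ : A) := by
    simpa only [inv_inv] using spectrum.inv_mem_resolventSet h
  have factor : (↑r⁻¹ : R) • ((algebraMap R A r - ↑u⁻¹) * u) = -(algebraMap R A ↑r⁻¹ - u) := by
    rw [sub_mul, Units.inv_mul, smul_sub, ← Algebra.smul_def, smul_smul, Units.inv_mul, one_smul,
      ← Algebra.algebraMap_eq_smul_one, neg_sub]
  refine left_inv_eq_right_inv (Ring.inverse_mul_cancel _ hr) ?_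
  rw [mul_neg, mul_smul_comm, ← mul_assoc, ← smul_mul_assoc, factor, neg_mul, neg_neg]
  exact Ring.mul_inverse_cancel _ h

theorem resolvent_units_inv_zero (u : Aˣ) : resolvent (↑u⁻¹ : A) (0 : R) = -(u : A) := by
  rw [resolvent, map_zero, zero_sub, ← Units.val_neg, Ring.inverse_unit, inv_neg, inv_inv,
    Units.val_neg]

end CommSemiring

section CommRing

variable {R A : Type*} [CommRing R] [Ring A] [Algebra R A]

theorem algebraMap_sub_add_algebraMap (a : A) (r s : R) :
    algebraMap R A r - (a + algebraMap R A s) = algebraMap R A (r - s) - a := by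
  rw [map_sub, sub_sub, add_comm]

theorem mem_resolventSet_add_algebraMap_iff {a : A} {r s : R} :
    r ∈ resolventSet R (a + algebraMap R A s) ↔ r - s ∈ resolventSet R a := by
  rw [spectrum.mem_resolventSet_iff, spectrum.mem_resolventSet_iff, algebraMap_sub_add_algebraMap]

theorem resolvent_add_algebraMap (a : A) (r s : R) :
    resolvent (a + algebraMap R A s) r = resolvent a (r - s) := by
  rw [resolvent, resolvent, algebraMap_sub_add_algebraMap]

end CommRing

section Field

variable {𝕜 A : Type*} [Field 𝕜] [Ring A] [Algebra 𝕜 A] {u : Aˣ} {t : 𝕜}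

theorem mem_resolventSet_units_inv (ht : t ≠ 0) (h : t⁻¹ ∈ resolventSet 𝕜 (u : A)) :
    t ∈ resolventSet 𝕜 (↑u⁻¹ : A) := by
  simpa using spectrum.inv_mem_resolventSet (r := (Units.mk0 t ht)⁻¹) (by simpa using h)

theorem resolvent_units_inv₀ (ht : t ≠ 0) (h : t⁻¹ ∈ resolventSet 𝕜 (u : A)) :
    resolvent (↑u⁻¹ : A) t = -t⁻¹ • ((u : A) * resolvent (u : A) t⁻¹) := by
  simpa using resolvent_units_inv (r := Units.mk0 t ht) (by simpa using h)

end Field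

section NormedField

variable {𝕜 A : Type*} [NormedField 𝕜] [NormedRing A] [NormedAlgebra 𝕜 A]

theorem norm_resolvent_units_inv_le {u : Aˣ} {t w : 𝕜} {C : ℝ} (ht : t ≠ 0)
    (hmem : t⁻¹ ∈ resolventSet 𝕜 (u : A)) (hle : ‖resolvent (u : A) t⁻¹‖ ≤ C / ‖t⁻¹ - w‖) :
    ‖resolvent (↑u⁻¹ : A) t‖ ≤ C * ‖(u : A)‖ / ‖1 - t * w‖ := by
  have norm_sub : ‖t‖ * ‖t⁻¹ - w‖ = ‖1 - t * w‖ := by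
    rw [← norm_mul, mul_sub, mul_inv_cancel₀ ht]
  calc ‖resolvent (↑u⁻¹ : A) t‖
      = ‖t‖⁻¹ * ‖(u : A) * resolvent (u : A) t⁻¹‖ := by
        rw [resolvent_units_inv₀ ht hmem, norm_smul, norm_neg, norm_inv]
    _ ≤ ‖t‖⁻¹ * (‖(u : A)‖ * (C / ‖t⁻¹ - w‖)) := by
        gcongr
        exact norm_mul_le_of_le le_rfl hle
    _ = C * ‖(u : A)‖ / ‖1 - t * w‖ := by
        rw [← norm_sub]
        ring

theorem norm_le_norm_sub_add_mul_norm_resolvent {a : A} {z : 𝕜} (hz : z ∈ resolventSet 𝕜 a)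
    (w : 𝕜) (b : A) :
    ‖b‖ ≤ (‖z - w‖ * ‖b‖ + ‖(algebraMap 𝕜 A w - a) * b‖) * ‖resolvent a z‖ := by
  have expand : b = resolvent a z * ((z - w) • b + (algebraMap 𝕜 A w - a) * b) := by
    rw [Algebra.smul_def, ← add_mul, map_sub, sub_add_sub_cancel, ← mul_assoc, resolvent,
      Ring.inverse_mul_cancel _ hz, one_mul]
  calc ‖b‖ ≤ ‖resolvent a z‖ * ‖(z - w) • b + (algebraMap 𝕜 A w - a) * b‖ := by
        conv_lhs => rw [expand]
        exact norm_mul_le _ _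
    _ ≤ ‖resolvent a z‖ * (‖z - w‖ * ‖b‖ + ‖(algebraMap 𝕜 A w - a) * b‖) := by
        gcongr
        exact norm_add_le_of_le (norm_smul_le _ _) le_rfl
    _ = _ := mul_comm _ _

theorem norm_le_mul_norm_of_frequently_norm_resolvent_le {a : A} {w : 𝕜} {C : ℝ}
    (h : ∃ᶠ z in cobounded 𝕜, z ∈ resolventSet 𝕜 a ∧ ‖resolvent a z‖ ≤ C / ‖z - w‖) (b : A) :
    ‖b‖ ≤ C * ‖b‖ := by
  set K : ℝ := ‖(algebraMap 𝕜 A w - a) * b‖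
  have norm_sub_atTop : Tendsto (fun z : 𝕜 ↦ ‖z - w‖) (cobounded 𝕜) atTop :=
    tendsto_norm_cobounded_atTop.comp (tendsto_sub_const_cobounded w)
  have lim : Tendsto (fun z : 𝕜 ↦ C * ‖b‖ + K * C / ‖z - w‖) (cobounded 𝕜) (𝓝 (C * ‖b‖)) := by
    simpa using (norm_sub_atTop.const_div_atTop (K * C)).const_add (C * ‖b‖)
  refine ge_of_tendsto_of_frequently lim ?_
  refine (h.and_eventually (norm_sub_atTop.eventually_gt_atTop 0)).mono ?_
  rintro z ⟨⟨hmem, hle⟩, hpos⟩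
  calc ‖b‖ ≤ (‖z - w‖ * ‖b‖ + K) * ‖resolvent a z‖ :=
        norm_le_norm_sub_add_mul_norm_resolvent hmem w b
    _ ≤ (‖z - w‖ * ‖b‖ + K) * (C / ‖z - w‖) := by gcongr
    _ = C * ‖b‖ + K * C / ‖z - w‖ := by field_simp

end NormedField

section RCLike

variable {𝕜 A : Type*} [RCLike 𝕜] [NormedRing A] [NormedAlgebra 𝕜 A] {C : ℝ}

theorem norm_le_mul_norm_of_ritt_ray {a : A}
    (hmem : ∀ z : ℝ, z < -1 → (z : 𝕜) ∈ resolventSet 𝕜 a)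
    (hle : ∀ z : ℝ, z < -1 → ‖resolvent a (z : 𝕜)‖ ≤ C / ‖(z : 𝕜) - 1‖) (b : A) :
    ‖b‖ ≤ C * ‖b‖ := by
  refine norm_le_mul_norm_of_frequently_norm_resolvent_le (a := a) (w := (1 : 𝕜)) ?_ b
  refine (RCLike.tendsto_ofReal_atBot_cobounded 𝕜).frequently ?_
  exact (eventually_lt_atBot (-1)).frequently.mono fun z hz ↦ ⟨hmem z hz, hle z hz⟩

theorem resolvent_units_inv_of_ritt_ray {u : Aˣ}
    (hmem : ∀ z : ℝ, z < -1 → (z : 𝕜) ∈ resolventSet 𝕜 (u : A))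
    (hle : ∀ z : ℝ, z < -1 → ‖resolvent (u : A) (z : 𝕜)‖ ≤ C / ‖(z : 𝕜) - 1‖)
    {s : ℝ} (hs : s ∈ Ioc (-1) 0) :
    (s : 𝕜) ∈ resolventSet 𝕜 (↑u⁻¹ : A) ∧
      ‖resolvent (↑u⁻¹ : A) (s : 𝕜)‖ ≤ C * ‖(u : A)‖ / (1 - s) := by
  rcases hs.2.eq_or_lt with rfl | hneg
  · rw [RCLike.ofReal_zero, resolvent_units_inv_zero, norm_neg, sub_zero, div_one]
    exact ⟨spectrum.zero_mem_resolventSet_of_unit _, norm_le_mul_norm_of_ritt_ray hmem hle _⟩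
  · have hinv : s⁻¹ < -1 := by simpa [inv_lt_of_neg hneg, inv_neg] using hs.1
    have hs₀ : (s : 𝕜) ≠ 0 := RCLike.ofReal_ne_zero.2 hneg.ne
    have hmem_s : (s : 𝕜)⁻¹ ∈ resolventSet 𝕜 (u : A) := by simpa using hmem s⁻¹ hinv
    have norm_one_sub : ‖1 - (s : 𝕜) * 1‖ = 1 - s := by
      rw [mul_one, ← RCLike.ofReal_one, ← RCLike.ofReal_sub, RCLike.norm_of_nonneg (by linarith)]
    refine ⟨mem_resolventSet_units_inv hs₀ hmem_s, ?_⟩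
    rw [← norm_one_sub]
    exact norm_resolvent_units_inv_le hs₀ hmem_s (by simpa using hle s⁻¹ hinv)

theorem ritt_inverse_plus_one_memV_general (u : Aˣ)
    (hmem : ∀ z : ℝ, z < -1 → (z : 𝕜) ∈ resolventSet 𝕜 (u : A))
    (hritt : ∀ z : ℝ, z < -1 → ‖resolvent (u : A) (z : 𝕜)‖ ≤ C / ‖(z : 𝕜) - 1‖) :
    (∀ t : 𝕜, t ≠ 0 → (1 / t) ∈ resolventSet 𝕜 (u : A) →
      t ∈ resolventSet 𝕜 (↑u⁻¹ : A) ∧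
        resolvent (↑u⁻¹ : A) t = (-(1 / t)) • ((u : A) * resolvent (u : A) (1 / t))) ∧
    (∀ t : ℝ, t ∈ Ioc (0 : ℝ) 1 →
      (t : 𝕜) ∈ resolventSet 𝕜 (↑u⁻¹ + 1 : A) ∧
        ‖resolvent (↑u⁻¹ + 1 : A) (t : 𝕜)‖ ≤ C * ‖(u : A)‖ / t) := by
  simp only [one_div]
  refine ⟨fun t ht h ↦ ⟨mem_resolventSet_units_inv ht h, resolvent_units_inv₀ ht h⟩, ?_⟩
  rintro t ⟨hpos, hle_one⟩
  have nonneg : 0 ≤ C * ‖(u : A)‖ :=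
    (norm_nonneg _).trans (norm_le_mul_norm_of_ritt_ray hmem hritt _)
  obtain ⟨hmem_inv, hle_inv⟩ := resolvent_units_inv_of_ritt_ray hmem hritt
    (s := t - 1) ⟨by linarith, by linarith⟩
  rw [RCLike.ofReal_sub, RCLike.ofReal_one] at hmem_inv hle_inv
  rw [← map_one (algebraMap 𝕜 A), mem_resolventSet_add_algebraMap_iff, resolvent_add_algebraMap]
  exact ⟨hmem_inv, hle_inv.trans (div_le_div_of_nonneg_left nonneg hpos (by linarith))⟩

end RCLike

/-- If `T` is an invertible Ritt operator on a complex Banach space (spectrum in the closed unit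
disk and `‖R(t,T)‖ ≤ C/|t-1|` for `|t| > 1`), with (two-sided) inverse `S`, then:
(i) for every `t ≠ 0` with `1/t` in the resolvent set of `T`, the point `t` lies in the resolvent
set of `S = T⁻¹` and `R(t,T⁻¹) = (-1/t)·T·R(1/t,T)`;
(ii) every `t ∈ (0,1]` lies in the resolvent set of `T⁻¹ + I` and
`‖R(t,T⁻¹+I)‖ ≤ C‖T‖/t`, i.e. `T⁻¹ + I ∈ V_{(0,1]}(X)` with constant `C‖T‖`. -/
theorem ritt_inverse_plus_one_memV {X : Type*} [NormedAddCommGroup X] [NormedSpace ℂ X]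
    [CompleteSpace X] (T S : X →L[ℂ] X) (hTS : T * S = 1) (hST : S * T = 1) (C : ℝ)
    (hspec : spectrum ℂ T ⊆ Metric.closedBall (0 : ℂ) 1)
    (hritt : ∀ t : ℂ, 1 < ‖t‖ → ‖resolvent T t‖ ≤ C / ‖t - 1‖) :
    (∀ t : ℂ, t ≠ 0 → (1 / t) ∈ resolventSet ℂ T →
      t ∈ resolventSet ℂ S ∧ resolvent S t = (-(1 / t)) • (T * resolvent T (1 / t))) ∧
    (∀ t : ℝ, t ∈ Ioc (0 : ℝ) 1 →
      (t : ℂ) ∈ resolventSet ℂ (S + 1) ∧ ‖resolvent (S + 1) (t : ℂ)‖ ≤ C * ‖T‖ / t) := by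
  have one_lt_norm (z : ℝ) (hz : z < -1) : 1 < ‖(z : ℂ)‖ := by
    rw [Complex.norm_real, Real.norm_eq_abs, lt_abs]
    exact Or.inr (lt_neg_of_lt_neg hz)
  exact ritt_inverse_plus_one_memV_general (𝕜 := ℂ) ⟨T, S, hTS, hST⟩
    (fun z hz ↦ not_not.1 fun h ↦
      (mem_closedBall_zero_iff.1 (hspec h)).not_gt (one_lt_norm z hz))
    (fun z hz ↦ hritt z (one_lt_norm z hz))
end

section
/- Let A, B ∈ V_{(0,b]}(X) with constants M_A, M_B. Then ‖f(A) − f(B)‖ ≤ −(M_A + M_B + M_A·M_B) · f(−‖A−B‖), where for s ≥ 0 one has f(−s) = ∫₀^b (−s)/(t+s) dτ(t) ≤ 0. -/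
open MeasureTheory Set Filter

/-- A bounded operator `A` belongs to `V_{(0,b]}(X)` with constant `M` if every `t ∈ (0,b]`
lies in the resolvent set of `A` and `‖R(t,A)‖ ≤ M/t`. -/
def MemV {X : Type*} [NormedAddCommGroup X] [NormedSpace ℂ X]
    (b M : ℝ) (A : X →L[ℂ] X) : Prop :=
  ∀ t ∈ Ioc (0 : ℝ) b, (t : ℂ) ∈ resolventSet ℂ A ∧ ‖resolvent A (t : ℂ)‖ ≤ M / t

/-- For `f ∈ ZR(0,b]` with representing measure `τ`, the operator
`f(A) = ∫₀^b A·R(t,A) dτ(t)` (a Bochner integral in operator norm). -/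
noncomputable def fOp {X : Type*} [NormedAddCommGroup X] [NormedSpace ℂ X] [CompleteSpace X]
    (τ : Measure ℝ) (b : ℝ) (A : X →L[ℂ] X) : X →L[ℂ] X :=
  ∫ t in Ioc (0 : ℝ) b, A * resolvent A (t : ℂ) ∂τ

/-!
Write `s = ‖A - B‖`. Since `A * R(t,A) = t • R(t,A) - 1`, the integrands of `f(A)` and `f(B)` differ
by `D = t • (R(t,A) - R(t,B))`. The triangle inequality gives `‖D‖ ≤ M_A + M_B`, and the second
resolvent identity gives `t * ‖D‖ ≤ M_A * s * M_B`. Adding `s` times the first bound to the second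
yields `(t + s) * ‖D‖ ≤ (M_A + M_B + M_A * M_B) * s`, which is integrated against `τ`.
-/

section Algebra

variable {R 𝔸 : Type*} [CommRing R] [Ring 𝔸] [Algebra R 𝔸] {a b : 𝔸} {z : R}

lemma mul_resolvent_eq_smul_resolvent_sub_one (ha : z ∈ resolventSet R a) :
    a * resolvent a z = z • resolvent a z - 1 := by
  have hinv : (algebraMap R 𝔸 z - a) * resolvent a z = 1 := Ring.mul_inverse_cancel _ ha
  rw [sub_mul, ← Algebra.smul_def] at hinv
  rw [← hinv, sub_sub_cancel]

lemma mul_resolvent_sub_mul_resolvent (ha : z ∈ resolventSet R a) (hb : z ∈ resolventSet R b) :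
    a * resolvent a z - b * resolvent b z = z • resolvent a z - z • resolvent b z := by
  rw [mul_resolvent_eq_smul_resolvent_sub_one ha, mul_resolvent_eq_smul_resolvent_sub_one hb,
    sub_sub_sub_cancel_right]

lemma smul_mul_resolvent_sub_mul_resolvent
    (ha : z ∈ resolventSet R a) (hb : z ∈ resolventSet R b) :
    z • (a * resolvent a z - b * resolvent b z) =
      z • resolvent a z * (a - b) * z • resolvent b z := by
  rw [mul_resolvent_sub_mul_resolvent ha hb, ← smul_sub, spectrum.resolvent_sub_resolvent ha hb,
    smul_mul_assoc, smul_mul_assoc, mul_smul_comm]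

end Algebra

section NormedAlgebra

variable {𝕜 𝔸 : Type*} [NormedField 𝕜] [NormedRing 𝔸] [NormedAlgebra 𝕜 𝔸]
  {a b : 𝔸} {z : 𝕜} {M N : ℝ}

lemma norm_mul_resolvent_le (ha : z ∈ resolventSet 𝕜 a) (hM : ‖z • resolvent a z‖ ≤ M) :
    ‖a * resolvent a z‖ ≤ M + ‖(1 : 𝔸)‖ := by
  rw [mul_resolvent_eq_smul_resolvent_sub_one ha]
  exact norm_sub_le_of_le hM le_rfl

lemma norm_mul_resolvent_sub_mul_resolvent_le_add
    (ha : z ∈ resolventSet 𝕜 a) (hb : z ∈ resolventSet 𝕜 b)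
    (hM : ‖z • resolvent a z‖ ≤ M) (hN : ‖z • resolvent b z‖ ≤ N) :
    ‖a * resolvent a z - b * resolvent b z‖ ≤ M + N := by
  rw [mul_resolvent_sub_mul_resolvent ha hb]
  exact norm_sub_le_of_le hM hN

lemma norm_mul_norm_mul_resolvent_sub_mul_resolvent_le
    (ha : z ∈ resolventSet 𝕜 a) (hb : z ∈ resolventSet 𝕜 b)
    (hM : ‖z • resolvent a z‖ ≤ M) (hN : ‖z • resolvent b z‖ ≤ N) :
    ‖z‖ * ‖a * resolvent a z - b * resolvent b z‖ ≤ M * ‖a - b‖ * N := by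
  rw [← norm_smul, smul_mul_resolvent_sub_mul_resolvent ha hb]
  exact norm_mul_le_of_le (norm_mul_le_of_le hM le_rfl) hN

lemma norm_mul_resolvent_sub_mul_resolvent_le
    (hz : z ≠ 0) (ha : z ∈ resolventSet 𝕜 a) (hb : z ∈ resolventSet 𝕜 b)
    (hM : ‖z • resolvent a z‖ ≤ M) (hN : ‖z • resolvent b z‖ ≤ N) :
    ‖a * resolvent a z - b * resolvent b z‖ ≤
      (M + N + M * N) * (‖a - b‖ / (‖z‖ + ‖a - b‖)) := by
  rw [← mul_div_assoc, le_div_iff₀ (by positivity)]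
  calc ‖a * resolvent a z - b * resolvent b z‖ * (‖z‖ + ‖a - b‖)
      = ‖z‖ * ‖a * resolvent a z - b * resolvent b z‖ +
          ‖a * resolvent a z - b * resolvent b z‖ * ‖a - b‖ := by ring
    _ ≤ M * ‖a - b‖ * N + (M + N) * ‖a - b‖ :=
        add_le_add (norm_mul_norm_mul_resolvent_sub_mul_resolvent_le ha hb hM hN) <|
          mul_le_mul_of_nonneg_right
            (norm_mul_resolvent_sub_mul_resolvent_le_add ha hb hM hN) (norm_nonneg _)
    _ = (M + N + M * N) * ‖a - b‖ := by ring

end NormedAlgebra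

lemma norm_ofReal_smul_le_of_norm_le_div {𝕜 E : Type*} [RCLike 𝕜] [SeminormedAddCommGroup E]
    [NormedSpace 𝕜 E] {x : E} {M t : ℝ} (ht : 0 < t) (hx : ‖x‖ ≤ M / t) :
    ‖(t : 𝕜) • x‖ ≤ M := by
  rwa [norm_smul, RCLike.norm_of_nonneg ht.le, ← le_div_iff₀' ht]

section Integral

variable {S : Set ℝ} {τ : Measure ℝ}

lemma integrableOn_const_div_add_const (hS : MeasurableSet S) (hpos : S ⊆ Ioi 0) (hτ : τ S < ⊤)
    {c : ℝ} (hc : 0 ≤ c) : IntegrableOn (fun t ↦ c / (t + c)) S τ := by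
  refine .of_bound hτ (Measurable.aestronglyMeasurable (by fun_prop)) 1 ?_
  filter_upwards [ae_restrict_mem hS] with t ht
  have htpos : 0 < t := hpos ht
  rw [Real.norm_of_nonneg (by positivity)]
  exact div_le_one_of_le₀ (by linarith) (by positivity)

variable {𝕜 𝔸 : Type*} [RCLike 𝕜] [NormedRing 𝔸] [NormedAlgebra 𝕜 𝔸]
  [CompleteSpace 𝔸] {a b : 𝔸} {M N : ℝ}

lemma continuousOn_mul_resolvent_ofReal (ha : ∀ t ∈ S, (t : 𝕜) ∈ resolventSet 𝕜 a) :
    ContinuousOn (fun t : ℝ ↦ a * resolvent a (t : 𝕜)) S := by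
  have hres : ContinuousOn (resolvent a) (resolventSet 𝕜 a) :=
    HasDerivAt.continuousOn fun _ hz ↦ spectrum.hasDerivAt_resolvent_const_left hz
  exact continuousOn_const.mul (hres.comp RCLike.continuous_ofReal.continuousOn ha)

lemma integrableOn_mul_resolvent_ofReal
    (hS : MeasurableSet S) (hpos : S ⊆ Ioi 0) (hτ : τ S < ⊤)
    (ha : ∀ t ∈ S, (t : 𝕜) ∈ resolventSet 𝕜 a ∧ ‖resolvent a (t : 𝕜)‖ ≤ M / t) :
    IntegrableOn (fun t : ℝ ↦ a * resolvent a (t : 𝕜)) S τ := by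
  have hcont := continuousOn_mul_resolvent_ofReal fun t ht ↦ (ha t ht).1
  refine .of_bound hτ (hcont.aestronglyMeasurable hS) (M + ‖(1 : 𝔸)‖) ?_
  filter_upwards [ae_restrict_mem hS] with t ht
  exact norm_mul_resolvent_le (ha t ht).1
    (norm_ofReal_smul_le_of_norm_le_div (hpos ht) (ha t ht).2)

theorem norm_fOp_sub_fOp_le_general [NormedSpace ℝ 𝔸]
    (hS : MeasurableSet S) (hpos : S ⊆ Ioi 0) (hτ : τ S < ⊤)
    (ha : ∀ t ∈ S, (t : 𝕜) ∈ resolventSet 𝕜 a ∧ ‖resolvent a (t : 𝕜)‖ ≤ M / t)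
    (hb : ∀ t ∈ S, (t : 𝕜) ∈ resolventSet 𝕜 b ∧ ‖resolvent b (t : 𝕜)‖ ≤ N / t) :
    ‖(∫ t in S, a * resolvent a (t : 𝕜) ∂τ) - ∫ t in S, b * resolvent b (t : 𝕜) ∂τ‖ ≤
      (M + N + M * N) * ∫ t in S, ‖a - b‖ / (t + ‖a - b‖) ∂τ := by
  rw [← integral_sub (integrableOn_mul_resolvent_ofReal hS hpos hτ ha)
    (integrableOn_mul_resolvent_ofReal hS hpos hτ hb), ← integral_const_mul]
  refine norm_integral_le_of_norm_le
    ((integrableOn_const_div_add_const hS hpos hτ (norm_nonneg _)).const_mul _) ?_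
  filter_upwards [ae_restrict_mem hS] with t ht
  have htpos : 0 < t := hpos ht
  simpa only [RCLike.norm_of_nonneg htpos.le] using
    norm_mul_resolvent_sub_mul_resolvent_le (RCLike.ofReal_ne_zero.2 htpos.ne')
      (ha t ht).1 (hb t ht).1
      (norm_ofReal_smul_le_of_norm_le_div htpos (ha t ht).2)
      (norm_ofReal_smul_le_of_norm_le_div htpos (hb t ht).2)

end Integral

/-- Theorem 1: for `A, B ∈ V_{(0,b]}(X)` with constants `M_A, M_B`,
`‖f(A) − f(B)‖ ≤ −(M_A + M_B + M_A·M_B)·f(−‖A−B‖)`, where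
`f(−s) = ∫₀^b (−s)/(t+s) dτ(t)`. -/
theorem norm_fOp_sub_fOp_le {X : Type*} [NormedAddCommGroup X] [NormedSpace ℂ X]
    [CompleteSpace X] (b : ℝ) (hb : 0 < b) (τ : Measure ℝ) [IsFiniteMeasure τ]
    (hτ : IntegrableOn (fun t : ℝ => 1 / t) (Ioc 0 b) τ)
    (MA MB : ℝ) (hMA : 0 < MA) (hMB : 0 < MB)
    (A B : X →L[ℂ] X) (hA : MemV b MA A) (hB : MemV b MB B) :
    ‖fOp τ b A - fOp τ b B‖ ≤
      -((MA + MB + MA * MB) *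
        ∫ t in Ioc (0 : ℝ) b, (-‖A - B‖) / (t + ‖A - B‖) ∂τ) := by
  simp only [neg_div, integral_neg, mul_neg, neg_neg]
  exact norm_fOp_sub_fOp_le_general measurableSet_Ioc Ioc_subset_Ioi_self (measure_lt_top τ _) hA hB
end

section
/- Let A, B ∈ V_{(0,b]}(X) with constants M_A, M_B, and assume that the operator A − B commutes with R(t,B) for every t ∈ (0,b]. Then for every x ∈ X with ‖x‖ = 1, ‖(f(A) − f(B))x‖ ≤ −(M_A + M_B + M_A·M_B) · f(−‖(A−B)x‖), where for s ≥ 0 one has f(−s) = ∫₀^b (−s)/(t+s) dτ(t) ≤ 0. -/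
open MeasureTheory Set Filter

/-!
Write `D = A - B`. Since `A R(t,A) = t R(t,A) - 1`, the integrand of `f(A) - f(B)` is
`Δ = t R(t,A) - t R(t,B)`, and `‖Δ x‖ ≤ (M_A + M_B) ‖x‖`. On the other hand, by the second
resolvent identity and the commutation of `D` with `R(t,B)`, `t Δ x = (t R(t,A)) (t R(t,B)) D x`,
so `t ‖Δ x‖ ≤ M_A M_B ‖D x‖`. Adding `‖D x‖` times the first bound to `‖x‖` times the second gives
`‖Δ x‖ (t ‖x‖ + ‖D x‖) ≤ (M_A + M_B + M_A M_B) ‖x‖ ‖D x‖`, and it remains to integrate over `t`.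
-/

section Algebra

variable {R S : Type*} [CommRing R] [Ring S] [Algebra R S] {a b : S} {r : R}

theorem mul_resolvent (ha : r ∈ resolventSet R a) : a * resolvent a r = r • resolvent a r - 1 := by
  have right_inverse : (algebraMap R S r - a) * resolvent a r = 1 :=
    Ring.mul_inverse_cancel _ ha
  rw [← right_inverse, sub_mul, ← Algebra.smul_def, sub_sub_cancel]

theorem smul_smul_resolvent_sub_smul_resolvent (ha : r ∈ resolventSet R a)
    (hb : r ∈ resolventSet R b) (hcomm : Commute (a - b) (resolvent b r)) :
    r • (r • resolvent a r - r • resolvent b r) =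
      r • resolvent a r * (r • resolvent b r) * (a - b) := by
  rw [← smul_sub, spectrum.resolvent_sub_resolvent ha hb, mul_assoc, hcomm.eq, smul_mul_smul_comm,
    smul_mul_assoc, smul_smul, mul_assoc]

end Algebra

theorem continuousOn_resolvent {𝕜 S : Type*} [NontriviallyNormedField 𝕜] [NormedRing S]
    [NormedAlgebra 𝕜 S] [CompleteSpace S] (a : S) :
    ContinuousOn (resolvent a) (resolventSet 𝕜 a) :=
  HasDerivAt.continuousOn fun _ hz => spectrum.hasDerivAt_resolvent_const_left hz

theorem le_add_mul_mul_div_of_le_mul {p α β n s t : ℝ} (ht : 0 < t) (hn : 0 ≤ n) (hs : 0 ≤ s)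
    (hpn : p ≤ α * n) (hps : t * p ≤ β * s) :
    p ≤ (α + β) * (n * (s / (t * n + s))) := by
  rcases hn.eq_or_lt with rfl | hn
  · simpa only [mul_zero, zero_mul] using hpn
  rw [← mul_div_assoc, ← mul_div_assoc, le_div_iff₀ (by positivity)]
  calc p * (t * n + s) = n * (t * p) + s * p := by ring
    _ ≤ n * (β * s) + s * (α * n) := by gcongr
    _ = (α + β) * (n * s) := by ring

theorem integrableOn_Ioc_div_mul_add {τ : Measure ℝ} {b n s : ℝ} (hτ : τ (Ioc 0 b) ≠ ⊤)
    (hn : 0 ≤ n) (hs : 0 ≤ s) : IntegrableOn (fun t : ℝ => s / (t * n + s)) (Ioc 0 b) τ := by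
  refine Measure.integrableOn_of_bounded (M := 1) hτ
    (Measurable.aestronglyMeasurable (by fun_prop))
    (ae_restrict_of_forall_mem measurableSet_Ioc fun t ht => ?_)
  have htn : 0 ≤ t * n := mul_nonneg ht.1.le hn
  rw [Real.norm_of_nonneg (by positivity)]
  exact div_le_one_of_le₀ (le_add_of_nonneg_left htn) (by positivity)

section Resolvent

variable {𝕜 X : Type*} [NontriviallyNormedField 𝕜] [NormedAddCommGroup X] [NormedSpace 𝕜 X]
  {A B : X →L[𝕜] X} {z : 𝕜} {MA MB : ℝ}

theorem norm_mul_norm_smul_resolvent_sub_smul_resolvent_apply_le (hzA : z ∈ resolventSet 𝕜 A)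
    (hzB : z ∈ resolventSet 𝕜 B) (hA : ‖z • resolvent A z‖ ≤ MA) (hB : ‖z • resolvent B z‖ ≤ MB)
    (hcomm : Commute (A - B) (resolvent B z)) (x : X) :
    ‖z‖ * ‖(z • resolvent A z - z • resolvent B z) x‖ ≤ MA * MB * ‖(A - B) x‖ := by
  rw [← norm_smul, ← smul_apply, smul_smul_resolvent_sub_smul_resolvent hzA hzB hcomm]
  exact ContinuousLinearMap.le_of_opNorm_le _ (norm_mul_le_of_le hA hB) ((A - B) x)

theorem norm_mul_resolvent_sub_mul_resolvent_apply_le (hz : z ≠ 0) (hzA : z ∈ resolventSet 𝕜 A)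
    (hzB : z ∈ resolventSet 𝕜 B) (hA : ‖z • resolvent A z‖ ≤ MA) (hB : ‖z • resolvent B z‖ ≤ MB)
    (hcomm : Commute (A - B) (resolvent B z)) (x : X) :
    ‖(A * resolvent A z - B * resolvent B z) x‖ ≤
      (MA + MB + MA * MB) * (‖x‖ * (‖(A - B) x‖ / (‖z‖ * ‖x‖ + ‖(A - B) x‖))) := by
  rw [mul_resolvent hzA, mul_resolvent hzB, sub_sub_sub_cancel_right]
  have norm_sub_bound : ‖z • resolvent A z - z • resolvent B z‖ ≤ MA + MB :=
    norm_sub_le_of_le hA hB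
  exact le_add_mul_mul_div_of_le_mul (norm_pos_iff.2 hz) (norm_nonneg _) (norm_nonneg _)
    (ContinuousLinearMap.le_of_opNorm_le _ norm_sub_bound x)
    (norm_mul_norm_smul_resolvent_sub_smul_resolvent_apply_le hzA hzB hA hB hcomm x)

end Resolvent

section MemV

variable {X : Type*} [NormedAddCommGroup X] [NormedSpace ℂ X] {b t M MA MB : ℝ} {A B : X →L[ℂ] X}

theorem MemV.norm_smul_resolvent_le (hA : MemV b M A) (ht : t ∈ Ioc 0 b) :
    ‖(t : ℂ) • resolvent A (t : ℂ)‖ ≤ M := by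
  rw [norm_smul, Complex.norm_of_nonneg ht.1.le]
  exact (le_div_iff₀' ht.1).1 (hA t ht).2

theorem MemV.norm_mul_resolvent_sub_mul_resolvent_apply_le (hA : MemV b MA A) (hB : MemV b MB B)
    (ht : t ∈ Ioc 0 b) (hcomm : Commute (A - B) (resolvent B (t : ℂ))) (x : X) :
    ‖(A * resolvent A (t : ℂ) - B * resolvent B (t : ℂ)) x‖ ≤
      (MA + MB + MA * MB) * (‖x‖ * (‖(A - B) x‖ / (t * ‖x‖ + ‖(A - B) x‖))) := by
  have bound := _root_.norm_mul_resolvent_sub_mul_resolvent_apply_le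
    (Complex.ofReal_ne_zero.2 ht.1.ne') (hA t ht).1 (hB t ht).1
    (hA.norm_smul_resolvent_le ht) (hB.norm_smul_resolvent_le ht) hcomm x
  rwa [Complex.norm_of_nonneg ht.1.le] at bound

theorem MemV.integrableOn_mul_resolvent [CompleteSpace X] {τ : Measure ℝ} (hA : MemV b M A)
    (hτ : τ (Ioc 0 b) ≠ ⊤) :
    IntegrableOn (fun t : ℝ => A * resolvent A (t : ℂ)) (Ioc 0 b) τ := by
  have continuousOn : ContinuousOn (fun t : ℝ => A * resolvent A (t : ℂ)) (Ioc 0 b) :=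
    continuousOn_const.mul <| (continuousOn_resolvent A).comp
      Complex.continuous_ofReal.continuousOn fun t ht => (hA t ht).1
  refine .of_bound hτ.lt_top (continuousOn.aestronglyMeasurable measurableSet_Ioc) (M + 1)
    (ae_restrict_of_forall_mem measurableSet_Ioc fun t ht => ?_)
  rw [mul_resolvent (hA t ht).1]
  exact norm_sub_le_of_le (hA.norm_smul_resolvent_le ht) ContinuousLinearMap.norm_id_le

theorem norm_fOp_sub_fOp_apply_le_general [CompleteSpace X] {τ : Measure ℝ}
    (hτ : τ (Ioc 0 b) ≠ ⊤) (hA : MemV b MA A) (hB : MemV b MB B)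
    (hcomm : ∀ t ∈ Ioc (0 : ℝ) b, Commute (A - B) (resolvent B (t : ℂ))) (x : X) :
    ‖(fOp τ b A - fOp τ b B) x‖ ≤
      (MA + MB + MA * MB) *
        (‖x‖ * ∫ t in Ioc (0 : ℝ) b, ‖(A - B) x‖ / (t * ‖x‖ + ‖(A - B) x‖) ∂τ) := by
  have hfA := hA.integrableOn_mul_resolvent hτ
  have hfB := hB.integrableOn_mul_resolvent hτ
  have hkernel := integrableOn_Ioc_div_mul_add hτ (norm_nonneg x) (norm_nonneg ((A - B) x))
  rw [fOp, fOp, ← integral_sub' hfA hfB, ContinuousLinearMap.integral_apply (hfA.sub hfB),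
    ← integral_const_mul, ← integral_const_mul]
  exact norm_integral_le_of_norm_le ((hkernel.const_mul _).const_mul _) <|
    ae_restrict_of_forall_mem measurableSet_Ioc fun t ht =>
      hA.norm_mul_resolvent_sub_mul_resolvent_apply_le hB ht (hcomm t ht) x

end MemV

/-- Theorem 2: if moreover `A − B` commutes with `R(t,B)` for all `t ∈ (0,b]`, then for every
unit vector `x`, `‖(f(A) − f(B))x‖ ≤ −(M_A + M_B + M_A·M_B)·f(−‖(A−B)x‖)`. -/
theorem norm_fOp_sub_fOp_apply_le {X : Type*} [NormedAddCommGroup X] [NormedSpace ℂ X]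
    [CompleteSpace X] (b : ℝ) (hb : 0 < b) (τ : Measure ℝ) [IsFiniteMeasure τ]
    (hτ : IntegrableOn (fun t : ℝ => 1 / t) (Ioc 0 b) τ)
    (MA MB : ℝ) (hMA : 0 < MA) (hMB : 0 < MB)
    (A B : X →L[ℂ] X) (hA : MemV b MA A) (hB : MemV b MB B)
    (hcomm : ∀ t ∈ Ioc (0 : ℝ) b,
      (A - B) * resolvent B (t : ℂ) = resolvent B (t : ℂ) * (A - B)) :
    ∀ x : X, ‖x‖ = 1 →
      ‖(fOp τ b A - fOp τ b B) x‖ ≤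
        -((MA + MB + MA * MB) *
          ∫ t in Ioc (0 : ℝ) b, (-‖(A - B) x‖) / (t + ‖(A - B) x‖) ∂τ) := by
  intro x hx
  simpa only [hx, one_mul, mul_one, neg_div, integral_neg, mul_neg, neg_neg] using
    norm_fOp_sub_fOp_apply_le_general (measure_ne_top τ _) hA hB hcomm x
end
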